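/- arXiv:1102.1902 — 2 statements merged into one kernel-verified Lean document; each statement's English description precedes it below -/
import Mathlib

section
/- There exists a curve z(α) = (z₁(α), z₂(α)) with the following properties: (1) z₁(α) − α and z₂(α) are real-analytic 2π-periodic functions and z satisfies the arc-chord condition; (2) z is odd, i.e. z(−α) = −z(α); (3) ∂_α z₁(α) > 0 for all α ∉ 2πℤ, ∂_α z₁(0) = 0, and ∂_α z₂(0) > 0; and moreover, defining v₁(α) = ∫_{−π}^{π} [sin(z₁(α) − z₁(β)) (∂_α z₁(α) − ∂_β z₁(β))] / [cosh(z₂(α) − z₂(β)) − cos(z₁(α) − z₁(β))] dβ, one has (∂_α v₁)(0) < 0. (Existence of an analytic curve with vertical tangent at α = 0 whose horizontal Muskat velocity has strictly negative derivative at that point.) -/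
open Real MeasureTheory Set

noncomputable section

/-- Distance from `β` to `2πℤ`. -/
def distTZ (β : ℝ) : ℝ := |β - 2 * π * ((round (β / (2 * π)) : ℤ) : ℝ)|

/-- `z(α) - (α, 0)` is `2π`-periodic. -/
def PerCurve (z : ℝ → ℝ × ℝ) : Prop := ∀ α, z (α + 2 * π) = z α + (2 * π, 0)

/-- Arc-chord condition. -/
def ArcChord (z : ℝ → ℝ × ℝ) : Prop :=
  ∃ C > 0, ∀ α β : ℝ,
    distTZ β ^ 2 ≤ C * (2 * (Real.cosh ((z α).2 - (z (α - β)).2)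
      - Real.cos ((z α).1 - (z (α - β)).1)))

/-- The horizontal component of the Muskat velocity (ρ² - ρ¹ = 4π). -/
def v1 (z : ℝ → ℝ × ℝ) (α : ℝ) : ℝ :=
  ∫ β in (-π)..π,
    Real.sin ((z α).1 - (z β).1)
      * (deriv (fun a => (z a).1) α - deriv (fun a => (z a).1) β)
      / (Real.cosh ((z α).2 - (z β).2) - Real.cos ((z α).1 - (z β).1))


/-! ### Elementary inequalities -/

lemma aux_cosh_lower (x : ℝ) : 1 + x ^ 2 / 2 ≤ cosh x := by
  have h1 : cosh x = 1 + 2 * sinh (x / 2) ^ 2 := by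
    have h := Real.cosh_two_mul (x / 2)
    have h2 := Real.cosh_sq (x / 2)
    rw [show 2 * (x / 2) = x by ring] at h
    rw [h]; linarith
  have h2 : (x / 2) ^ 2 ≤ sinh (x / 2) ^ 2 := by
    rcases le_total 0 (x / 2) with h | h
    · exact pow_le_pow_left₀ h (Real.self_le_sinh_iff.2 h) 2
    · have := Real.sinh_le_self_iff.2 h
      nlinarith
  rw [h1]; nlinarith

lemma aux_sinh_upper {x R : ℝ} (h : |x| ≤ R) : |sinh x| ≤ cosh R * |x| := by
  have hR : 0 ≤ R := (abs_nonneg x).trans h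
  have := Convex.norm_image_sub_le_of_norm_deriv_le (𝕜 := ℝ) (f := Real.sinh) (s := Icc (-R) R)
    (x := 0) (y := x) (C := cosh R) (fun y _ => Real.differentiable_sinh y) (fun y hy => by
      rw [Real.deriv_sinh, Real.norm_eq_abs, abs_of_pos (Real.cosh_pos y), Real.cosh_le_cosh,
        abs_of_nonneg hR]
      exact abs_le.2 hy) (convex_Icc _ _) ⟨by linarith, hR⟩ (abs_le.1 h)
  simpa using this

/-- First component of the curve. -/
def s (x : ℝ) : ℝ := x - sin x

lemma s_hasDerivAt (x : ℝ) : HasDerivAt s (1 - cos x) x :=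
  (hasDerivAt_id x).sub (Real.hasDerivAt_sin x)

lemma s_continuous : Continuous s := by unfold s; fun_prop

lemma s_neg (x : ℝ) : s (-x) = - s x := by simp [s]; ring

lemma taylor_bound {f f' : ℝ → ℝ} {M : ℝ} (hM : 0 ≤ M) (hf : ∀ x, HasDerivAt f (f' x) x)
    (hL : ∀ x y, |f' x - f' y| ≤ M * |x - y|) (a b : ℝ) :
    |f a - f (a - b) - b * f' a| ≤ M * b ^ 2 := by
  have hs : ∀ x ∈ uIcc (a - b) a, |x - a| ≤ |b| := by
    intro x hx
    have := abs_sub_left_of_mem_uIcc (a := a) (b := a - b) (c := x) (by rwa [uIcc_comm])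
    rw [show a - b - a = - b by ring, abs_neg] at this
    exact this
  have := Convex.norm_image_sub_le_of_norm_hasDerivWithin_le (𝕜 := ℝ)
    (f := fun x => f x - x * f' a) (f' := fun x => f' x - f' a) (s := uIcc (a - b) a)
    (x := a - b) (y := a) (C := M * |b|)
    (fun x hx => by
      have := (hf x).sub ((hasDerivAt_id x).mul_const (f' a))
      rw [one_mul] at this
      exact this.hasDerivWithinAt)
    (fun x hx => (hL x a).trans (mul_le_mul_of_nonneg_left (hs x hx) hM)) (convex_uIcc _ _)
    left_mem_uIcc right_mem_uIcc
  rw [Real.norm_eq_abs, Real.norm_eq_abs, show a - (a - b) = b by ring, mul_assoc, ← sq, sq_abs]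
    at this
  convert this using 2
  ring

lemma cos_lip (x y : ℝ) : |cos x - cos y| ≤ |x - y| := by
  have := Convex.norm_image_sub_le_of_norm_deriv_le (𝕜 := ℝ) (f := Real.cos) (s := univ)
    (x := y) (y := x) (C := 1) (fun y _ => Real.differentiable_cos y) (fun y hy => by
      simpa using Real.abs_sin_le_one y) convex_univ trivial trivial
  simpa using this

lemma sin_lip (x y : ℝ) : |sin x - sin y| ≤ |x - y| := by
  have := Convex.norm_image_sub_le_of_norm_deriv_le (𝕜 := ℝ) (f := Real.sin) (s := univ)
    (x := y) (y := x) (C := 1) (fun y _ => Real.differentiable_sin y) (fun y hy => by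
      simpa using Real.abs_cos_le_one y) convex_univ trivial trivial
  simpa using this

lemma s_lip (x y : ℝ) : |s x - s y| ≤ 2 * |x - y| := by
  have := sin_lip x y
  have e : s x - s y = (x - y) - (sin x - sin y) := by simp [s]; ring
  rw [e]
  calc _ ≤ |x - y| + |sin x - sin y| := abs_sub _ _
    _ ≤ _ := by linarith

lemma s_taylor (a b : ℝ) : |s a - s (a - b) - b * (1 - cos a)| ≤ b ^ 2 := by
  have := taylor_bound (M := 1) zero_le_one s_hasDerivAt (fun x y => by
    rw [show 1 - cos x - (1 - cos y) = -(cos x - cos y) by ring, abs_neg, one_mul]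
    exact cos_lip x y) a b
  simpa using this

lemma s_sq (x : ℝ) : |s x| ≤ x ^ 2 := by
  have := s_taylor 0 (-x)
  rw [abs_sub_comm] at this
  simpa [s, abs_sub_comm] using this

/-! ### Assumptions on the second component -/

structure Good (g g' g'' : ℝ → ℝ) (M : ℝ) : Prop where
  hM : 0 ≤ M
  d1 : ∀ x, HasDerivAt g (g' x) x
  d2 : ∀ x, HasDerivAt g' (g'' x) x
  per : Function.Periodic g (2 * π)
  odd : ∀ x, g (-x) = - g x
  b0 : ∀ x, |g x| ≤ M
  b1 : ∀ x, |g' x| ≤ M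
  b2 : ∀ x, |g'' x| ≤ M
  pos : 0 < g' 0

namespace Good
variable {g g' g'' : ℝ → ℝ} {M : ℝ}

lemma cont (h : Good g g' g'' M) : Continuous g :=
  continuous_iff_continuousAt.2 fun x => (h.d1 x).continuousAt

lemma cont' (h : Good g g' g'' M) : Continuous g' :=
  continuous_iff_continuousAt.2 fun x => (h.d2 x).continuousAt

lemma lip (h : Good g g' g'' M) (x y : ℝ) : |g x - g y| ≤ M * |x - y| := by
  simpa using Convex.norm_image_sub_le_of_norm_hasDerivWithin_le (𝕜 := ℝ) (f := g) (s := univ)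
    (x := y) (y := x) (C := M) (fun y _ => (h.d1 y).hasDerivWithinAt) (fun y hy => h.b1 y)
    convex_univ trivial trivial

lemma lip' (h : Good g g' g'' M) (x y : ℝ) : |g' x - g' y| ≤ M * |x - y| := by
  simpa using Convex.norm_image_sub_le_of_norm_hasDerivWithin_le (𝕜 := ℝ) (f := g') (s := univ)
    (x := y) (y := x) (C := M) (fun y _ => (h.d2 y).hasDerivWithinAt) (fun y hy => h.b2 y)
    convex_univ trivial trivial

lemma per' (h : Good g g' g'' M) : Function.Periodic g' (2 * π) := by
  intro x
  have h1 : HasDerivAt g (g' (x + 2 * π)) x := by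
    have := (h.d1 (x + 2 * π)).comp_add_const x (2 * π)
    have e : (fun x => g (x + 2 * π)) = g := funext h.per
    rwa [e] at this
  exact h1.unique (h.d1 x)

lemma zero (h : Good g g' g'' M) : g 0 = 0 := by
  have := h.odd 0
  simp at this; linarith

lemma speed (h : Good g g' g'' M) : ∃ κ > 0, ∀ x, κ ≤ (1 - cos x) + |g' x| := by
  have hp : Function.Periodic (fun x => (1 - cos x) + |g' x|) (2 * π) := by
    intro x; simp [h.per' x]
  have hc : Continuous (fun x => (1 - cos x) + |g' x|) := by
    have := h.cont'; fun_prop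
  have hk := hp.compact_of_continuous (by positivity) hc
  obtain ⟨m, ⟨x0, hx0⟩, hmin⟩ := hk.exists_isLeast (range_nonempty _)
  refine ⟨m, ?_, fun x => hmin ⟨x, rfl⟩⟩
  rw [← hx0]
  have h1 := Real.cos_le_one x0
  have h2 := abs_nonneg (g' x0)
  rcases h1.lt_or_eq with h3 | h3
  · simp only; linarith
  · obtain ⟨n, hn⟩ := (Real.cos_eq_one_iff x0).1 h3
    have : g' x0 = g' 0 := by
      rw [← hn]
      have := h.per'.int_mul n 0
      simpa using this
    simp only [this]
    have := abs_pos.2 h.pos.ne'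
    linarith

end Good

lemma s_far {δ : ℝ} (hδ : 0 < δ) : ∃ m > 0, ∀ a b : ℝ, δ ≤ |b| → |b| ≤ π →
    m ≤ 1 - cos (s a - s (a - b)) := by
  have hpi := Real.pi_gt_three
  by_cases hd : δ ≤ π
  swap
  · exact ⟨1, one_pos, fun a b h1 h2 => absurd (h1.trans h2) hd⟩
  obtain ⟨b0, hb0, hmin⟩ := (isCompact_Icc (a := δ) (b := π)).exists_isMinOn
    (nonempty_Icc.2 hd) (f := fun b => b - 2 * sin (b / 2)) (by fun_prop)
  set m0 := b0 - 2 * sin (b0 / 2) with hm0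
  have hm0pos : 0 < m0 := by
    have := Real.sin_lt (x := b0 / 2) (by have := hb0.1; linarith)
    linarith
  have hle : m0 ≤ π + 2 := by
    have := Real.neg_one_le_sin (b0 / 2)
    have := hb0.2
    linarith
  obtain ⟨t0, ht0, hmin2⟩ := (isCompact_Icc (a := m0) (b := π + 2)).exists_isMinOn
    (nonempty_Icc.2 hle) (f := fun t => 1 - cos t) (by fun_prop)
  refine ⟨1 - cos t0, ?_, ?_⟩
  · have h1 := Real.cos_le_one t0
    rcases h1.lt_or_eq with h3 | h3
    · linarith
    · exfalso
      have := (Real.cos_eq_one_iff_of_lt_of_lt (by have := ht0.1; linarith)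
        (by have := ht0.2; linarith)).1 h3
      have := ht0.1
      linarith
  · intro a b h1 h2
    have e : |s a - s (a - b)| = |(|b| - 2 * sin (|b| / 2) * cos (a - b / 2))| := by
      have e1 : s a - s (a - b) = b - 2 * sin (b / 2) * cos (a - b / 2) := by
        have := Real.sin_sub_sin a (a - b)
        rw [show (a - (a - b)) / 2 = b / 2 by ring, show (a + (a - b)) / 2 = a - b / 2 by ring]
          at this
        simp only [s]; linarith
      rw [e1]
      rcases abs_cases b with ⟨hb, _⟩ | ⟨hb, _⟩
      · rw [hb]
      · rw [hb, neg_div, Real.sin_neg, ← abs_neg]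
        congr 1; ring
    have hs : 0 ≤ sin (|b| / 2) := Real.sin_nonneg_of_nonneg_of_le_pi (by positivity) (by linarith)
    have hs1 := Real.sin_le_one (|b| / 2)
    have hc1 := Real.cos_le_one (a - b / 2)
    have hc2 := Real.neg_one_le_cos (a - b / 2)
    have k1 : m0 ≤ |b| - 2 * sin (|b| / 2) := hmin (show |b| ∈ Icc δ π from ⟨h1, h2⟩)
    have k2 : |b| - 2 * sin (|b| / 2) ≤ |b| - 2 * sin (|b| / 2) * cos (a - b / 2) := by nlinarith
    have k3 : |b| - 2 * sin (|b| / 2) * cos (a - b / 2) ≤ π + 2 := by nlinarith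
    rw [← Real.cos_abs (s a - s (a - b)), e, Real.cos_abs]
    exact hmin2 (show _ ∈ Icc m0 (π + 2) from ⟨by linarith, k3⟩)

lemma aux_cos_upper {x : ℝ} (h : |x| ≤ π) : cos x ≤ 1 - x ^ 2 / 8 := by
  have h1 := Real.cos_le_one_sub_mul_cos_sq h
  have h2 : 1 / 8 ≤ 2 / π ^ 2 := by
    rw [div_le_div_iff₀ (by norm_num) (by positivity)]
    nlinarith [Real.pi_lt_four, Real.pi_pos]
  nlinarith [sq_nonneg x]

lemma Good.lower {g g' g'' : ℝ → ℝ} {M : ℝ} (h : Good g g' g'' M) :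
    ∃ c > 0, ∀ a b : ℝ, |b| ≤ π →
      c * b ^ 2 ≤ cosh (g a - g (a - b)) - cos (s a - s (a - b)) := by
  obtain ⟨κ, hκ, hsp⟩ := h.speed
  have hM := h.hM
  set δ := min (κ / (2 * (M + 1))) 1 with hδ
  have hδ0 : 0 < δ := by positivity
  obtain ⟨m, hm, hfar⟩ := s_far hδ0
  have hpi := Real.pi_gt_three
  refine ⟨min (m / π ^ 2) (κ ^ 2 / 64), by positivity, fun a b hb => ?_⟩
  rcases le_total δ |b| with hd | hd
  · have h1 := hfar a b hd hb
    have h2 := Real.one_le_cosh (g a - g (a - b))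
    calc _ ≤ m / π ^ 2 * b ^ 2 := by gcongr; exact min_le_left _ _
      _ ≤ m / π ^ 2 * π ^ 2 := by gcongr m / π ^ 2 * ?_; exact sq_le_sq' (by linarith [neg_abs_le b]) (by linarith [le_abs_self b])
      _ = m := by field_simp
      _ ≤ _ := by linarith
  · have hb1 : |b| ≤ 1 := hd.trans (min_le_right _ _)
    have hb2 : |b| * (2 * (M + 1)) ≤ κ := by
      have := hd.trans (min_le_left _ _)
      rwa [le_div_iff₀ (by positivity)] at this
    set D1 := s a - s (a - b)
    set D2 := g a - g (a - b)
    have t1 : |D1 - b * (1 - cos a)| ≤ b ^ 2 := s_taylor a b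
    have t2 : |D2 - b * g' a| ≤ M * b ^ 2 := taylor_bound hM h.d1 h.lip' a b
    have u1 : |b| * (1 - cos a) ≤ |D1| + b ^ 2 := by
      have := abs_sub_abs_le_abs_sub (b * (1 - cos a)) D1
      rw [abs_sub_comm _ D1, abs_mul, abs_of_nonneg (by linarith [Real.cos_le_one a] : 0 ≤ 1 - cos a)]
        at this
      linarith
    have u2 : |b| * |g' a| ≤ |D2| + M * b ^ 2 := by
      have := abs_sub_abs_le_abs_sub (b * g' a) D2
      rw [abs_sub_comm _ D2, abs_mul] at this
      linarith
    have hsq : b ^ 2 = |b| * |b| := by rw [← sq, sq_abs]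
    have hb0 := abs_nonneg b
    have u3 : |b| * κ / 2 ≤ |D1| + |D2| := by
      have := mul_le_mul_of_nonneg_left (hsp a) hb0
      have := mul_le_mul_of_nonneg_left hb2 hb0
      nlinarith
    have hD1 : |D1| ≤ π := by
      have := s_lip a (a - b)
      rw [show a - (a - b) = b by ring] at this
      linarith
    have v1 := aux_cos_upper hD1
    have v2 := aux_cosh_lower D2
    have v3 : (|b| * κ / 2) ^ 2 ≤ 2 * (D1 ^ 2 + D2 ^ 2) := by
      calc _ ≤ (|D1| + |D2|) ^ 2 := by gcongr
        _ ≤ _ := by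
          have := sq_nonneg (|D1| - |D2|)
          have := sq_abs D1
          have := sq_abs D2
          nlinarith
    calc _ ≤ κ ^ 2 / 64 * b ^ 2 := by gcongr; exact min_le_right _ _
      _ ≤ _ := by rw [hsq]; nlinarith [sq_nonneg D1, sq_nonneg D2]

/-! ### Differentiating the velocity -/

def NN (a b : ℝ) : ℝ := sin (s a - s (a - b)) * ((1 - cos a) - (1 - cos (a - b)))

def DD (g : ℝ → ℝ) (a b : ℝ) : ℝ := cosh (g a - g (a - b)) - cos (s a - s (a - b))

def NN' (a b : ℝ) : ℝ :=
  cos (s a - s (a - b)) * ((1 - cos a) - (1 - cos (a - b))) * ((1 - cos a) - (1 - cos (a - b)))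
    + sin (s a - s (a - b)) * (sin a - sin (a - b))

def DD' (g g' : ℝ → ℝ) (a b : ℝ) : ℝ :=
  sinh (g a - g (a - b)) * (g' a - g' (a - b))
    + sin (s a - s (a - b)) * ((1 - cos a) - (1 - cos (a - b)))

def FF' (g g' : ℝ → ℝ) (a b : ℝ) : ℝ :=
  (NN' a b * DD g a b - NN a b * DD' g g' a b) / DD g a b ^ 2

def QQ (g : ℝ → ℝ) (b : ℝ) : ℝ :=
  sin (s b) * (1 - cos b) * sinh (g b) / (cosh (g b) - cos (s b)) ^ 2

def GG (g : ℝ → ℝ) (b : ℝ) : ℝ := sin (s b) * (1 - cos b) / (cosh (g b) - cos (s b))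

lemma d1_bound (a b : ℝ) : |sin (s a - s (a - b))| ≤ 2 * |b| := by
  have h1 := s_lip a (a - b)
  rw [show a - (a - b) = b by ring] at h1
  exact Real.abs_sin_le_abs.trans h1

lemma d1'_bound (a b : ℝ) : |(1 - cos a) - (1 - cos (a - b))| ≤ |b| := by
  have h1 := cos_lip (a - b) a
  rw [show a - b - a = - b by ring, abs_neg] at h1
  rwa [show (1 - cos a) - (1 - cos (a - b)) = cos (a - b) - cos a by ring]

lemma d1''_bound (a b : ℝ) : |sin a - sin (a - b)| ≤ |b| := by
  have h1 := sin_lip a (a - b)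
  rwa [show a - (a - b) = b by ring] at h1

lemma NN_bound (a b : ℝ) : |NN a b| ≤ 2 * b ^ 2 := by
  rw [NN, abs_mul, ← sq_abs b]
  calc _ ≤ 2 * |b| * |b| := by
        have h1 := d1_bound a b
        have h2 := d1'_bound a b
        gcongr
    _ = _ := by ring

lemma NN'_bound (a b : ℝ) : |NN' a b| ≤ 3 * b ^ 2 := by
  rw [NN', ← sq_abs b]
  refine (abs_add_le _ _).trans ?_
  rw [abs_mul, abs_mul, abs_mul]
  calc _ ≤ 1 * |b| * |b| + 2 * |b| * |b| := by
        have h0 := Real.abs_cos_le_one (s a - s (a - b))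
        have h1 := d1_bound a b
        have h2 := d1'_bound a b
        have h3 := d1''_bound a b
        gcongr
    _ = _ := by ring

lemma NN_hasDerivAt (a b : ℝ) : HasDerivAt (fun a => NN a b) (NN' a b) a := by
  have h1 : HasDerivAt (fun a => s a - s (a - b)) ((1 - cos a) - (1 - cos (a - b))) a :=
    (s_hasDerivAt a).sub ((s_hasDerivAt (a - b)).comp_sub_const a b)
  have h2 : HasDerivAt (fun a => (1 - cos a) - (1 - cos (a - b))) (sin a - sin (a - b)) a := by
    have h3 : ∀ x, HasDerivAt (fun a => 1 - cos a) (sin x) x := fun x => by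
      simpa using (Real.hasDerivAt_cos x).const_sub 1
    exact (h3 a).sub ((h3 (a - b)).comp_sub_const a b)
  exact h1.sin.mul h2

namespace Good
variable {g g' g'' : ℝ → ℝ} {M : ℝ}

lemma DD'_bound (h : Good g g' g'' M) (a b : ℝ) :
    |DD' g g' a b| ≤ (cosh (2 * M) * M * M + 2) * b ^ 2 := by
  have hM := h.hM
  have hc := Real.cosh_pos (2 * M)
  have e1 : |g a - g (a - b)| ≤ M * |b| := by
    have := h.lip a (a - b)
    rwa [show a - (a - b) = b by ring] at this
  have e2 : |g' a - g' (a - b)| ≤ M * |b| := by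
    have := h.lip' a (a - b)
    rwa [show a - (a - b) = b by ring] at this
  have e3 : |g a - g (a - b)| ≤ 2 * M := by
    have := abs_sub (g a) (g (a - b))
    have := h.b0 a
    have := h.b0 (a - b)
    linarith
  have e4 : |sinh (g a - g (a - b))| ≤ cosh (2 * M) * (M * |b|) :=
    (aux_sinh_upper e3).trans (by gcongr)
  rw [DD', ← sq_abs b]
  refine (abs_add_le _ _).trans ?_
  rw [abs_mul, abs_mul]
  calc _ ≤ (cosh (2 * M) * (M * |b|)) * (M * |b|) + 2 * |b| * |b| := by
        have h1 := d1_bound a b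
        have h2 := d1'_bound a b
        gcongr
    _ = _ := by ring

lemma DD_hasDerivAt (h : Good g g' g'' M) (a b : ℝ) :
    HasDerivAt (fun a => DD g a b) (DD' g g' a b) a := by
  have h1 : HasDerivAt (fun a => s a - s (a - b)) ((1 - cos a) - (1 - cos (a - b))) a :=
    (s_hasDerivAt a).sub ((s_hasDerivAt (a - b)).comp_sub_const a b)
  have h2 : HasDerivAt (fun a => g a - g (a - b)) (g' a - g' (a - b)) a :=
    (h.d1 a).sub ((h.d1 (a - b)).comp_sub_const a b)
  have := h2.cosh.sub h1.cos
  refine this.congr_deriv ?_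
  simp only [DD']; ring

lemma FF'_bound (h : Good g g' g'' M) {c : ℝ} (hc : 0 < c) {a b : ℝ}
    (hD : c * b ^ 2 ≤ DD g a b) :
    |FF' g g' a b| ≤ 3 / c + 2 * (cosh (2 * M) * M * M + 2) / c ^ 2 := by
  have hM := h.hM
  have hch := Real.cosh_pos (2 * M)
  by_cases hb : b = 0
  · subst hb
    simp [FF', NN', NN, DD]
    positivity
  have hb2 : 0 < b ^ 2 := by positivity
  have hDp : 0 < DD g a b := lt_of_lt_of_le (by positivity) hD
  have e : FF' g g' a b = NN' a b / DD g a b - NN a b * DD' g g' a b / DD g a b ^ 2 := by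
    rw [FF']; field_simp
  rw [e]
  refine (abs_sub _ _).trans ?_
  rw [abs_div, abs_div, abs_mul, abs_of_pos hDp, abs_of_pos (pow_pos hDp 2)]
  gcongr ?_ + ?_
  · calc _ ≤ 3 * b ^ 2 / (c * b ^ 2) := by
          gcongr; exact NN'_bound a b
      _ = _ := by field_simp
  · calc _ ≤ 2 * b ^ 2 * ((cosh (2 * M) * M * M + 2) * b ^ 2) / (c * b ^ 2) ^ 2 := by
          gcongr
          · exact NN_bound a b
          · exact h.DD'_bound a b
      _ = _ := by field_simp

lemma FF_hasDerivAt (h : Good g g' g'' M) {a b : ℝ}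
    (hD : b ≠ 0 → DD g a b ≠ 0) :
    HasDerivAt (fun a => NN a b / DD g a b) (FF' g g' a b) a := by
  by_cases hb : b = 0
  · subst hb
    have : (fun a => NN a 0 / DD g a 0) = fun _ => 0 := by
      funext a; simp [NN]
    rw [this]
    simp [FF', NN', NN, DD, hasDerivAt_const]
  exact (NN_hasDerivAt a b).div (h.DD_hasDerivAt a b) (hD hb)

lemma meas_NN (a : ℝ) : Continuous (NN a) := by
  have := s_continuous
  unfold NN; fun_prop

lemma meas_NN' (a : ℝ) : Continuous (NN' a) := by
  have := s_continuous
  unfold NN'; fun_prop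

lemma cont_DD (h : Good g g' g'' M) (a : ℝ) : Continuous (DD g a) := by
  have := s_continuous
  have := h.cont
  unfold DD; fun_prop

lemma cont_DD' (h : Good g g' g'' M) (a : ℝ) : Continuous (DD' g g' a) := by
  have := s_continuous
  have := h.cont
  have := h.cont'
  unfold DD'; fun_prop

lemma intervalIntegrable_bdd {f : ℝ → ℝ} {a b C : ℝ} (hf : Measurable f)
    (hb : ∀ x ∈ uIoc a b, |f x| ≤ C) : IntervalIntegrable f volume a b := by
  rw [intervalIntegrable_iff]
  refine Measure.integrableOn_of_bounded (M := C) ?_ hf.aestronglyMeasurable ?_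
  · simp [uIoc]
  · rw [ae_restrict_iff' measurableSet_uIoc]
    exact Filter.Eventually.of_forall hb

lemma mem_pi {x : ℝ} (hx : x ∈ uIoc (-π) π) : |x| ≤ π := by
  rw [uIoc_of_le (by linarith [Real.pi_pos])] at hx
  exact abs_le.2 ⟨hx.1.le, hx.2⟩

lemma v1_eq (h : Good g g' g'' M) (a : ℝ) :
    v1 (fun x => (s x, g x)) a = ∫ b in (-π)..π, NN a b / DD g a b := by
  have hder : ∀ x, deriv (fun a => s a) x = 1 - cos x := fun x => (s_hasDerivAt x).deriv
  simp only [v1, hder]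
  set f : ℝ → ℝ := fun β => sin (s a - s β) * (1 - cos a - (1 - cos β)) /
    (cosh (g a - g β) - cos (s a - s β)) with hf
  have hper : Function.Periodic f (2 * π) := by
    intro x
    have e : s a - s (x + 2 * π) = s a - s x - 2 * π := by simp [s]; ring
    simp only [hf, e, h.per x, Real.sin_sub_two_pi, Real.cos_sub_two_pi, Real.cos_add_two_pi]
  have h1 : ∫ b in (-π)..π, NN a b / DD g a b = ∫ b in (-π)..π, f (a - b) := rfl
  rw [h1, intervalIntegral.integral_comp_sub_left f a]
  have h2 := hper.intervalIntegral_add_eq (a - π) (-π)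
  rw [show a - π + 2 * π = a - -π by ring, show -π + 2 * π = π by ring] at h2
  exact h2.symm

lemma hasDerivAt_v1_aux (h : Good g g' g'' M) :
    IntervalIntegrable (FF' g g' 0) volume (-π) π ∧
    HasDerivAt (v1 (fun x => (s x, g x))) (∫ b in (-π)..π, FF' g g' 0 b) 0 := by
  obtain ⟨c, hc, hlow⟩ := h.lower
  have e : v1 (fun x => (s x, g x)) = fun a => ∫ b in (-π)..π, NN a b / DD g a b :=
    funext h.v1_eq
  rw [e]
  have hDpos : ∀ a b : ℝ, |b| ≤ π → b ≠ 0 → 0 < DD g a b := fun a b hb hb0 =>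
    lt_of_lt_of_le (by positivity) (hlow a b hb)
  refine intervalIntegral.hasDerivAt_integral_of_dominated_loc_of_deriv_le
    (bound := fun _ => 3 / c + 2 * (cosh (2 * M) * M * M + 2) / c ^ 2) (s := univ)
    Filter.univ_mem ?_ ?_ ?_ ?_ ?_ ?_
  · exact Filter.Eventually.of_forall fun a =>
      ((meas_NN a).measurable.div (h.cont_DD a).measurable).aestronglyMeasurable
  · refine intervalIntegrable_bdd (C := 2 / c)
      ((meas_NN 0).measurable.div (h.cont_DD 0).measurable) fun b hb => ?_
    by_cases hb0 : b = 0
    · subst hb0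
      simp [NN]; positivity
    · have hp := hDpos 0 b (mem_pi hb) hb0
      rw [abs_div, abs_of_pos hp]
      calc _ ≤ 2 * b ^ 2 / (c * b ^ 2) := by
            gcongr
            · exact NN_bound 0 b
            · exact hlow 0 b (mem_pi hb)
        _ = _ := by field_simp
  · refine Measurable.aestronglyMeasurable ?_
    exact ((((meas_NN' 0).mul (h.cont_DD 0)).sub
      ((meas_NN 0).mul (h.cont_DD' 0))).measurable).div ((h.cont_DD 0).pow 2).measurable
  · exact Filter.Eventually.of_forall fun b hb a _ => h.FF'_bound hc (hlow a b (mem_pi hb))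
  · exact intervalIntegrable_const
  · exact Filter.Eventually.of_forall fun b hb a _ =>
      h.FF_hasDerivAt (fun hb0 => (hDpos a b (mem_pi hb) hb0).ne')

lemma den_lower (h : Good g g' g'' M) {c : ℝ} 
    (hlow : ∀ a b : ℝ, |b| ≤ π →
      c * b ^ 2 ≤ cosh (g a - g (a - b)) - cos (s a - s (a - b))) {b : ℝ} (hb : |b| ≤ π) :
    c * b ^ 2 ≤ cosh (g b) - cos (s b) := by
  have := hlow b b hb
  simpa [h.zero, s] using this

lemma num_bound (b : ℝ) : |sin (s b) * (1 - cos b)| ≤ b ^ 4 / 2 := by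
  have h1 : |sin (s b)| ≤ b ^ 2 := Real.abs_sin_le_abs.trans (s_sq b)
  have h2 : |1 - cos b| ≤ b ^ 2 / 2 := by
    rw [abs_of_nonneg (by linarith [Real.cos_le_one b])]
    linarith [Real.one_sub_sq_div_two_le_cos (x := b)]
  rw [abs_mul]
  calc _ ≤ b ^ 2 * (b ^ 2 / 2) := by gcongr
    _ = _ := by ring

lemma QQ_integrable (h : Good g g' g'' M) : IntervalIntegrable (QQ g) volume (-π) π := by
  obtain ⟨c, hc, hlow⟩ := h.lower
  have hM := h.hM
  have hg := h.cont
  have hs := s_continuous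
  refine intervalIntegrable_bdd (C := cosh M * M / (2 * c ^ 2)) ?_ fun b hb => ?_
  · unfold QQ
    exact Measurable.div (by fun_prop) (by fun_prop)
  have hch := Real.cosh_pos M
  by_cases hb0 : b = 0
  · subst hb0; simp [QQ]; positivity
  have hl := h.den_lower hlow (mem_pi hb)
  have hp : 0 < c * b ^ 2 := by positivity
  have hsi : |sinh (g b)| ≤ cosh M * M :=
    (aux_sinh_upper (h.b0 b)).trans (by gcongr; exact h.b0 b)
  rw [QQ, abs_div, abs_mul, abs_of_pos (pow_pos (hp.trans_le hl) 2)]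
  calc _ ≤ b ^ 4 / 2 * (cosh M * M) / (c * b ^ 2) ^ 2 := by
        gcongr
        exact num_bound b
    _ = _ := by field_simp

lemma GG_tendsto (h : Good g g' g'' M) : ContinuousOn (GG g) (uIcc (-π) π) := by
  obtain ⟨c, hc, hlow⟩ := h.lower
  have hg := h.cont
  have hs := s_continuous
  have hpi := Real.pi_pos
  intro b hb
  rw [uIcc_of_le (by linarith)] at hb
  by_cases hb0 : b = 0
  · subst hb0
    refine ContinuousAt.continuousWithinAt ?_
    have h0 : GG g 0 = 0 := by simp [GG]
    rw [ContinuousAt, h0]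
    refine squeeze_zero_norm' (a := fun b => b ^ 2 / (2 * c)) ?_ ?_
    · filter_upwards [Icc_mem_nhds (show -π < 0 by linarith) hpi] with b hb
      by_cases hb0 : b = 0
      · subst hb0; simp [GG]
      have hl := h.den_lower hlow (abs_le.2 hb)
      have hp : 0 < c * b ^ 2 := by positivity
      rw [GG, Real.norm_eq_abs, abs_div, abs_of_pos (hp.trans_le hl)]
      calc _ ≤ b ^ 4 / 2 / (c * b ^ 2) := by
            gcongr
            exact num_bound b
        _ = _ := by field_simp
    · have : Continuous (fun b : ℝ => b ^ 2 / (2 * c)) := by fun_prop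
      simpa using this.tendsto 0
  · refine ContinuousAt.continuousWithinAt ?_
    have hl := h.den_lower hlow (abs_le.2 hb)
    have hp : 0 < c * b ^ 2 := by positivity
    unfold GG
    exact ContinuousAt.div (by fun_prop) (by fun_prop) (hp.trans_le hl).ne'

lemma hasDerivAt_v1 (h : Good g g' g'' M) :
    HasDerivAt (v1 (fun x => (s x, g x))) (g' 0 * ∫ b in (-π)..π, QQ g b) 0 := by
  obtain ⟨hi, hd⟩ := h.hasDerivAt_v1_aux
  obtain ⟨c, hc, hlow⟩ := h.lower
  have hQ := (h.QQ_integrable).const_mul (g' 0)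
  have hg'even : ∀ x, g' (-x) = g' x := by
    intro x
    have h1 := (h.d1 (-x)).scomp x (hasDerivAt_neg x)
    have h2 : g ∘ Neg.neg = fun x => - g x := funext h.odd
    rw [h2] at h1
    have := h1.unique (h.d1 x).neg
    simpa using this
  have key := integral_eq_of_hasDerivAt_off_countable (GG g)
    (fun b => FF' g g' 0 b - g' 0 * QQ g b) (a := -π) (b := π) (s := {0})
    (countable_singleton 0) h.GG_tendsto ?_ (hi.sub hQ)
  · rw [intervalIntegral.integral_sub hi hQ] at key
    have e1 : GG g π = 0 := by simp [GG, s]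
    have e2 : GG g (-π) = 0 := by simp [GG, s]
    rw [e1, e2, intervalIntegral.integral_const_mul] at key
    rw [show g' 0 * ∫ b in (-π)..π, QQ g b = ∫ b in (-π)..π, FF' g g' 0 b by linarith]
    exact hd
  · rintro b ⟨hb, hb0⟩
    have hb0 : b ≠ 0 := hb0
    rw [min_eq_left (by linarith [Real.pi_pos]), max_eq_right (by linarith [Real.pi_pos])] at hb
    have hl := h.den_lower hlow (abs_le.2 ⟨hb.1.le, hb.2.le⟩)
    have hp : 0 < c * b ^ 2 := by positivity
    have hne := (hp.trans_le hl).ne'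
    have h3 : HasDerivAt (fun a => 1 - cos a) (sin b) b := by
      simpa using (Real.hasDerivAt_cos b).const_sub 1
    have := (((s_hasDerivAt b).sin.mul h3).div ((h.d1 b).cosh.sub (s_hasDerivAt b).cos) hne)
    refine this.congr_deriv ?_
    have z0 : s 0 = 0 := by simp [s]
    simp only [FF', NN', NN, DD, DD', QQ, zero_sub, h.odd, s_neg, h.zero, z0, Pi.mul_apply, Pi.sub_apply, neg_neg, hg'even,
      Real.cos_neg, Real.sin_neg, Real.cos_zero, Real.sin_zero]
    field_simp
    ring

end Good

/-! ### The family of curves -/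

def gk (k : ℕ) (x : ℝ) : ℝ := sin x * ((1 + cos x) ^ (k + 1) - 1)

lemma per_deriv {f : ℝ → ℝ} {T : ℝ} (hf : Function.Periodic f T) :
    Function.Periodic (deriv f) T := by
  intro x
  rw [← deriv_comp_add_const]
  congr 1
  exact funext hf

lemma per_bdd {f : ℝ → ℝ} (hf : Function.Periodic f (2 * π)) (hc : Continuous f) :
    ∃ M, ∀ x, |f x| ≤ M := by
  have := hf.isBounded_of_continuous (by positivity) hc
  obtain ⟨M, hM⟩ := this.exists_norm_le
  exact ⟨M, fun x => hM _ ⟨x, rfl⟩⟩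

lemma gk_contDiff (k : ℕ) {n : WithTop ℕ∞} : ContDiff ℝ n (gk k) := by
  unfold gk
  have h1 : ContDiff ℝ n Real.sin := Real.contDiff_sin
  have h2 : ContDiff ℝ n Real.cos := Real.contDiff_cos
  exact h1.mul (((contDiff_const.add h2).pow _).sub contDiff_const)

lemma gk_deriv_zero (k : ℕ) : 0 < deriv (gk k) 0 := by
  have h : HasDerivAt (fun x : ℝ => (1 + cos x) ^ (k + 1) - 1)
      (((k + 1 : ℕ) : ℝ) * (1 + cos 0) ^ k * (- sin 0)) 0 := by
    have := (((Real.hasDerivAt_cos 0).const_add 1).pow (k + 1)).sub_const 1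
    simpa using this
  have h2 := (Real.hasDerivAt_sin 0).mul h
  have e : deriv (gk k) 0 = _ := h2.deriv
  rw [e]
  simp only [Real.cos_zero, Real.sin_zero]
  have : (1 : ℝ) < (1 + 1) ^ (k + 1) := one_lt_pow₀ (by norm_num) (by omega)
  linarith

lemma gk_good (k : ℕ) : ∃ M, Good (gk k) (deriv (gk k)) (deriv (deriv (gk k))) M := by
  have hper : Function.Periodic (gk k) (2 * π) := by intro x; simp [gk]
  have hc2 : ContDiff ℝ 2 (gk k) := gk_contDiff k
  have hc1 : ContDiff ℝ 1 (deriv (gk k)) := by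
    have := (contDiff_succ_iff_deriv (n := 1) (f := gk k) (𝕜 := ℝ)).1 (gk_contDiff k)
    exact this.2.2
  have hc0 : Continuous (deriv (deriv (gk k))) := hc1.continuous_deriv le_rfl
  obtain ⟨M0, h0⟩ := per_bdd hper hc2.continuous
  obtain ⟨M1, h1⟩ := per_bdd (per_deriv hper) hc1.continuous
  obtain ⟨M2, h2⟩ := per_bdd (per_deriv (per_deriv hper)) hc0
  refine ⟨max M0 (max M1 M2), ?_, ?_, ?_, hper, ?_, ?_, ?_, ?_, gk_deriv_zero k⟩
  · exact ((abs_nonneg _).trans (h0 0)).trans (le_max_left _ _)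
  · exact fun x => (hc2.differentiable (by norm_num) x).hasDerivAt
  · exact fun x => (hc1.differentiable (by norm_num) x).hasDerivAt
  · intro x; simp [gk]
  · exact fun x => (h0 x).trans (le_max_left _ _)
  · exact fun x => (h1 x).trans ((le_max_left _ _).trans (le_max_right _ _))
  · exact fun x => (h2 x).trans ((le_max_right _ _).trans (le_max_right _ _))

lemma frac_mono {X X1 C : ℝ} (h1 : 1 ≤ X1) (h2 : X1 ≤ X) (hC : |C| ≤ 1) (hlt : C < X1) :
    X / (X - C) ^ 2 ≤ X1 / (X1 - C) ^ 2 := by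
  have p1 : 0 < X1 - C := by linarith
  have p2 : 0 < X - C := by linarith
  rw [div_le_div_iff₀ (by positivity) (by positivity)]
  have hC2 : C ^ 2 ≤ 1 := by rw [← sq_abs]; nlinarith [abs_nonneg C]
  have : 0 ≤ (X - X1) * (X * X1 - C ^ 2) := mul_nonneg (by linarith) (by nlinarith)
  nlinarith

lemma abs_sinh_le_cosh (y : ℝ) : |sinh y| ≤ cosh y := by
  rw [abs_le]
  constructor
  · have := Real.exp_pos y
    rw [← Real.cosh_add_sinh] at this; linarith
  · exact (Real.sinh_lt_cosh y).le

lemma gk_ge {k : ℕ} {x : ℝ} (h1 : 0 ≤ sin x) (h2 : 0 ≤ cos x) : gk 0 x ≤ gk k x := by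
  unfold gk
  have : (1 + cos x) ^ (0 + 1) ≤ (1 + cos x) ^ (k + 1) :=
    pow_le_pow_right₀ (by linarith) (by omega)
  gcongr

lemma gk0 (x : ℝ) : gk 0 x = sin x * cos x := by simp [gk]

lemma QQ_abs_le (g : ℝ → ℝ) (b : ℝ) : |QQ g b| ≤
    |sin (s b) * (1 - cos b)| * (cosh (g b) / (cosh (g b) - cos (s b)) ^ 2) := by
  rw [QQ, abs_div, abs_mul, abs_of_nonneg (sq_nonneg (cosh (g b) - cos (s b))), mul_div_assoc]
  gcongr
  exact abs_sinh_le_cosh _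

lemma QQ_meas (k : ℕ) : Measurable (QQ (gk k)) := by
  have hg : Continuous (gk k) := (gk_contDiff k (n := 0)).continuous
  have hs := s_continuous
  unfold QQ
  exact Measurable.div (by fun_prop) (by fun_prop)

open Filter Topology in
lemma first_half : Tendsto (fun k => ∫ x in (0 : ℝ)..(π / 2), QQ (gk k) x) atTop (𝓝 0) := by
  obtain ⟨M, hG⟩ := gk_good 0
  obtain ⟨c, hc, hlow⟩ := hG.lower
  have hpi := Real.pi_pos
  have main : Tendsto (fun k => ∫ x in (0 : ℝ)..(π / 2), QQ (gk k) x) atTop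
      (𝓝 (∫ x in (0 : ℝ)..(π / 2), (fun _ => (0 : ℝ)) x)) := by
    refine intervalIntegral.tendsto_integral_filter_of_dominated_convergence
      (fun _ => cosh 1 / (2 * c ^ 2)) ?_ ?_ intervalIntegrable_const ?_
    · exact Eventually.of_forall fun k => (QQ_meas k).aestronglyMeasurable
    · refine Eventually.of_forall fun k => Eventually.of_forall fun x hx => ?_
      rw [uIoc_of_le (by linarith)] at hx
      have hx0 := hx.1
      have hsin : 0 ≤ sin x := Real.sin_nonneg_of_nonneg_of_le_pi hx.1.le (by linarith [hx.2])
      have hcos : 0 ≤ cos x := Real.cos_nonneg_of_neg_pi_div_two_le_of_le (by linarith) hx.2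
      have hle := gk_ge (k := k) hsin hcos
      have h0 : 0 ≤ gk 0 x := by rw [gk0]; positivity
      have h1 : gk 0 x ≤ 1 := by
        rw [gk0]; exact mul_le_one₀ (Real.sin_le_one x) hcos (Real.cos_le_one x)
      have hl := hG.den_lower hlow (b := x) (by rw [abs_of_pos hx0]; linarith [hx.2])
      have hp : 0 < c * x ^ 2 := by positivity
      have hch : cosh (gk 0 x) ≤ cosh (gk k x) := by
        rw [Real.cosh_le_cosh, abs_of_nonneg h0, abs_of_nonneg (h0.trans hle)]; exact hle
      have hch1 : cosh (gk 0 x) ≤ cosh 1 := by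
        rw [Real.cosh_le_cosh, abs_of_nonneg h0, abs_one]; exact h1
      have hf := frac_mono (Real.one_le_cosh (gk 0 x)) hch (Real.abs_cos_le_one (s x))
        (by linarith)
      rw [Real.norm_eq_abs]
      refine (QQ_abs_le _ _).trans ?_
      calc _ ≤ x ^ 4 / 2 * (cosh 1 / (c * x ^ 2) ^ 2) := by
            gcongr ?_ * ?_
            · exact Good.num_bound x
            · refine hf.trans ?_
              gcongr
        _ = _ := by field_simp
    · refine Eventually.of_forall fun x hx => ?_
      rw [uIoc_of_le (by linarith)] at hx
      have hx0 := hx.1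
      rcases hx.2.eq_or_lt with hxe | hxl
      · have : ∀ k, QQ (gk k) x = 0 := by
          intro k; simp [QQ, gk, hxe]
        simp [this]
      have hsin : 0 < sin x := Real.sin_pos_of_pos_of_lt_pi hx.1 (by linarith)
      have hcos : 0 < cos x := Real.cos_pos_of_mem_Ioo ⟨by linarith, hxl⟩
      have hy : Tendsto (fun k => gk k x) atTop atTop := by
        unfold gk
        refine Tendsto.const_mul_atTop hsin ?_
        refine tendsto_atTop_add_const_right _ _ ?_
        exact (tendsto_pow_atTop_atTop_of_one_lt (by linarith)).comp (tendsto_add_atTop_nat 1)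
      refine squeeze_zero_norm' (a := fun k => |sin (s x) * (1 - cos x)| * (4 / gk k x)) ?_ ?_
      · filter_upwards [hy.eventually_ge_atTop 2] with k hk
        rw [Real.norm_eq_abs]
        refine (QQ_abs_le _ _).trans ?_
        gcongr ?_ * ?_
        have h1 := aux_cosh_lower (gk k x)
        have h2 := Real.cos_le_one (s x)
        set X := cosh (gk k x)
        have h3 : gk k x ≤ X := by nlinarith [sq_nonneg (gk k x - 1)]
        have h4 : X / 2 ≤ X - cos (s x) := by linarith
        have h5 : 0 < X := by linarith
        calc _ ≤ X / (X / 2) ^ 2 := by gcongr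
          _ = 4 / X := by field_simp; norm_num
          _ ≤ _ := by gcongr
      · have := (tendsto_const_nhds (x := (4 : ℝ))).div_atTop hy
        simpa using this.const_mul |sin (s x) * (1 - cos x)|
  simpa using main

/-- Lower bound profile on the second half. -/
def JJ (x : ℝ) : ℝ := sin (s x) * (1 - cos x) * sinh (-(sin x * cos x)) / (cosh 1 + 1) ^ 2

lemma JJ_cont : Continuous JJ := by
  have := s_continuous
  unfold JJ; fun_prop

lemma JJ_pos : 0 < ∫ x in (π / 2)..π, JJ x := by
  have hpi := Real.pi_pos
  refine intervalIntegral.intervalIntegral_pos_of_pos_on (JJ_cont.intervalIntegrable _ _) ?_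
    (by linarith)
  rintro x ⟨h1, h2⟩
  have hsin : 0 < sin x := Real.sin_pos_of_pos_of_lt_pi (by linarith) h2
  have hcos : cos x < 0 := Real.cos_neg_of_pi_div_two_lt_of_lt h1 (by linarith)
  have hs : 0 < sin (s x) := by
    refine Real.sin_pos_of_pos_of_lt_pi ?_ ?_
    · have := Real.sin_lt (x := x) (by linarith)
      unfold s; linarith
    · unfold s; linarith
  have : 0 < sinh (-(sin x * cos x)) := Real.sinh_pos_iff.2 (by nlinarith)
  have hc := Real.cosh_pos 1
  have : 0 < 1 - cos x := by linarith
  unfold JJ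
  positivity

lemma second_half (k : ℕ) {x : ℝ} (hx : x ∈ Icc (π / 2) π) : QQ (gk k) x ≤ - JJ x := by
  obtain ⟨M, hG⟩ := gk_good k
  obtain ⟨c, hc, hlow⟩ := hG.lower
  have hpi := Real.pi_pos
  have hx0 : 0 < x := by linarith [hx.1]
  have hl := hG.den_lower hlow (b := x) (by rw [abs_of_pos hx0]; exact hx.2)
  have hp : 0 < c * x ^ 2 := by positivity
  have hsin : 0 ≤ sin x := Real.sin_nonneg_of_nonneg_of_le_pi hx0.le hx.2
  have hcos : cos x ≤ 0 := Real.cos_nonpos_of_pi_div_two_le_of_le hx.1 (by linarith [hx.2])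
  have hcos1 := Real.neg_one_le_cos x
  have hsin1 := Real.sin_le_one x
  have hs : 0 ≤ sin (s x) := by
    refine Real.sin_nonneg_of_nonneg_of_le_pi ?_ ?_
    · have := Real.sin_le (x := x) hx0.le
      unfold s; linarith
    · unfold s; linarith [hx.2]
  have hp1 : (1 + cos x) ^ (k + 1) ≤ 1 + cos x :=
    pow_le_of_le_one (by linarith) (by linarith) (by omega)
  have hp0 : 0 ≤ (1 + cos x) ^ (k + 1) := pow_nonneg (by linarith) _
  have hy1 : gk k x ≤ sin x * cos x := by
    unfold gk; gcongr; linarith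
  have hy2 : |gk k x| ≤ 1 := by
    rw [abs_le]; unfold gk; constructor <;> nlinarith
  have hch : cosh (gk k x) ≤ cosh 1 := by
    rw [Real.cosh_le_cosh, abs_one]; exact hy2
  have hD : cosh (gk k x) - cos (s x) ≤ cosh 1 + 1 := by
    linarith [Real.neg_one_le_cos (s x)]
  have hDp : 0 < cosh (gk k x) - cos (s x) := hp.trans_le hl
  have hsh : sinh (gk k x) ≤ - sinh (-(sin x * cos x)) := by
    rw [Real.sinh_neg, neg_neg]; exact Real.sinh_le_sinh.2 hy1
  have hw : 0 ≤ sinh (-(sin x * cos x)) := Real.sinh_nonneg_iff.2 (by nlinarith)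
  have hS : 0 ≤ sin (s x) * (1 - cos x) := mul_nonneg hs (by linarith)
  have step1 : JJ x ≤ sin (s x) * (1 - cos x) * sinh (-(sin x * cos x)) /
      (cosh (gk k x) - cos (s x)) ^ 2 := by
    unfold JJ; gcongr
  have step2 : QQ (gk k) x ≤ sin (s x) * (1 - cos x) * (- sinh (-(sin x * cos x))) /
      (cosh (gk k x) - cos (s x)) ^ 2 := by
    unfold QQ; gcongr
  rw [mul_neg, neg_div] at step2
  linarith

lemma exists_neg : ∃ k, ∫ x in (-π)..π, QQ (gk k) x < 0 := by
  have hpi := Real.pi_pos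
  obtain ⟨k, hk⟩ := (first_half.eventually_lt_const JJ_pos).exists
  refine ⟨k, ?_⟩
  obtain ⟨M, hG⟩ := gk_good k
  have hi := hG.QQ_integrable
  have sub : ∀ a b : ℝ, -π ≤ a → a ≤ b → b ≤ π → IntervalIntegrable (QQ (gk k)) volume a b := by
    intro a b h1 h2 h3
    refine hi.mono_set ?_
    rw [uIcc_of_le h2, uIcc_of_le (by linarith)]
    exact Icc_subset_Icc h1 h3
  have even : ∀ x, QQ (gk k) (-x) = QQ (gk k) x := by
    intro x
    simp only [QQ, s_neg, hG.odd, Real.sin_neg, Real.cos_neg, Real.sinh_neg, Real.cosh_neg]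
    ring
  have e1 : ∫ x in (-π)..0, QQ (gk k) x = ∫ x in (0 : ℝ)..π, QQ (gk k) x := by
    have := intervalIntegral.integral_comp_neg (a := 0) (b := π) (QQ (gk k))
    simp only [even, neg_zero] at this
    exact this.symm
  have e2 := intervalIntegral.integral_add_adjacent_intervals
    (sub (-π) 0 le_rfl (by linarith) (by linarith)) (sub 0 π (by linarith) (by linarith) le_rfl)
  have e3 := intervalIntegral.integral_add_adjacent_intervals
    (sub 0 (π / 2) (by linarith) (by linarith) (by linarith))
    (sub (π / 2) π (by linarith) (by linarith) le_rfl)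
  have e4 : ∫ x in (π / 2)..π, QQ (gk k) x ≤ ∫ x in (π / 2)..π, - JJ x :=
    intervalIntegral.integral_mono_on (by linarith)
      (sub (π / 2) π (by linarith) (by linarith) le_rfl)
      (JJ_cont.neg.intervalIntegrable _ _) (fun x hx => second_half k hx)
  rw [intervalIntegral.integral_neg] at e4
  linarith

/-- There exists an analytic periodic curve, odd, satisfying the arc-chord
condition, with a vertical tangent at `α = 0` (and strictly increasing first
component elsewhere), whose horizontal Muskat velocity has strictly negative
derivative at `α = 0`. -/
theorem exists_curve_vertical_tangent_negative_velocity_derivative :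
    ∃ z : ℝ → ℝ × ℝ,
      (∀ α : ℝ, AnalyticAt ℝ z α) ∧ PerCurve z ∧ ArcChord z ∧
      (∀ α : ℝ, z (-α) = - z α) ∧
      (∀ α : ℝ, (¬ ∃ k : ℤ, α = 2 * π * k) → 0 < deriv (fun a => (z a).1) α) ∧
      deriv (fun a => (z a).1) 0 = 0 ∧
      0 < deriv (fun a => (z a).2) 0 ∧
      ∃ d : ℝ, d < 0 ∧ HasDerivAt (v1 z) d 0 := by
  obtain ⟨k, hk⟩ := exists_neg
  obtain ⟨M, hG⟩ := gk_good k
  have hpi := Real.pi_pos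
  have hder : ∀ x, deriv (fun a => s a) x = 1 - cos x := fun x => (s_hasDerivAt x).deriv
  refine ⟨fun x => (s x, gk k x), ?_, ?_, ?_, ?_, ?_, ?_, ?_, ?_⟩
  · intro α
    refine AnalyticAt.prod ?_ ?_
    · exact analyticAt_id.sub Real.analyticAt_sin
    · exact Real.analyticAt_sin.mul
        (((analyticAt_const.add Real.analyticAt_cos).pow _).sub analyticAt_const)
  · intro α
    ext
    · simp [s]; ring
    · simp [hG.per α]
  · obtain ⟨c, hc, hlow⟩ := hG.lower
    refine ⟨1 / (2 * c), by positivity, fun α β => ?_⟩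
    set n := round (β / (2 * π)) with hn
    set b := β - 2 * π * (n : ℝ) with hb
    have hb1 : |b| ≤ π := by
      have h1 := abs_sub_round (β / (2 * π))
      have h2 : b = (β / (2 * π) - n) * (2 * π) := by rw [hb]; field_simp
      rw [h2, abs_mul, abs_of_pos (by positivity : 0 < 2 * π)]
      calc _ ≤ 1 / 2 * (2 * π) := by gcongr
        _ = π := by ring
    have hd : distTZ β ^ 2 = b ^ 2 := by rw [distTZ, sq_abs]
    have e0 : α - β = (α - b) - n * (2 * π) := by rw [hb]; ring
    have e1 : gk k (α - β) = gk k (α - b) := by rw [e0, hG.per.sub_int_mul_eq]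
    have e2 : s α - s (α - β) = s α - s (α - b) + n * (2 * π) := by
      rw [e0]; unfold s; rw [Real.sin_sub_int_mul_two_pi]; ring
    have := hlow α b hb1
    simp only [hd, e1, e2, Real.cos_add_int_mul_two_pi]
    calc b ^ 2 = 1 / (2 * c) * (2 * (c * b ^ 2)) := by field_simp
      _ ≤ _ := by gcongr
  · intro α
    simp [s_neg, hG.odd]
  · intro α hα
    simp only [hder]
    have h1 := Real.cos_le_one α
    rcases h1.lt_or_eq with h | h
    · linarith
    · obtain ⟨n, hn⟩ := (Real.cos_eq_one_iff α).1 h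
      exact absurd ⟨n, by rw [← hn]; ring⟩ hα
  · simp only [hder]; simp
  · exact hG.pos
  · exact ⟨_, mul_neg_of_pos_of_neg hG.pos hk, hG.hasDerivAt_v1⟩
end
end

section
/- There exists a universal constant C such that for all 0 ≤ r' < r and every 2π-periodic function g : S̄_r → ℂ holomorphic on the open strip S_r = {α + iζ ∈ ℂ : |ζ| < r} and continuous up to the boundary, with ‖g‖_r := ( Σ_± ∫_𝕋 |g(α ± ir)|² dα + Σ_± ∫_𝕋 |∂_α⁴ g(α ± ir)|² dα )^{1/2} finite, one has ‖∂_α g‖_{r'} ≤ (C/(r − r')) ‖g‖_r, where ‖∂_α g‖_{r'} is defined by the same formula with r replaced by r' and g replaced by ∂_α g. -/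
open Real MeasureTheory Set

noncomputable section

/-- Open horizontal strip of half-width `r`. -/
def stripO (r : ℝ) : Set ℂ := {w : ℂ | |w.im| < r}

/-- Closed horizontal strip of half-width `r`. -/
def stripC (r : ℝ) : Set ℂ := {w : ℂ | |w.im| ≤ r}

/-- The scale-of-Banach-spaces norm: `L²` of the function and of its fourth
derivative on the two boundary lines of the strip of half-width `ρ`. -/
def strNorm (G : ℂ → ℂ) (ρ : ℝ) : ℝ :=
  Real.sqrt
    ((∫ α in (-π)..π, ‖G ((α : ℂ) + (ρ : ℂ) * Complex.I)‖ ^ 2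
        + ‖iteratedDeriv 4 (fun x : ℝ => G ((x : ℂ) + (ρ : ℂ) * Complex.I)) α‖ ^ 2)
      + ∫ α in (-π)..π, ‖G ((α : ℂ) - (ρ : ℂ) * Complex.I)‖ ^ 2
        + ‖iteratedDeriv 4 (fun x : ℝ => G ((x : ℂ) - (ρ : ℂ) * Complex.I)) α‖ ^ 2)

/-- Unnormalised Fourier coefficient. -/
def co (φ : ℝ → ℂ) (k : ℤ) : ℂ :=
  ∫ x in (-π)..π, Complex.exp (-(k * x * Complex.I)) * φ x

lemma norm_coeffOn (φ : ℝ → ℂ) (k : ℤ) (h : -π < π) :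
    ‖fourierCoeffOn h φ k‖ ^ 2 = (2 * π)⁻¹ ^ 2 * ‖co φ k‖ ^ 2 := by
  rw [fourierCoeffOn_eq_integral, norm_smul, mul_pow]
  have e : (1 / (π - -π)) = (2 * π)⁻¹ := by rw [one_div]; congr 1; ring
  rw [e, Real.norm_of_nonneg (by positivity)]
  congr 3
  unfold co
  apply intervalIntegral.integral_congr
  intro x _
  simp only [smul_eq_mul, fourier_coe_apply]
  congr 2
  have : (π : ℂ) ≠ 0 := by exact_mod_cast Real.pi_ne_zero
  push_cast
  field_simp
  ring

lemma parseval (φ : ℝ → ℂ) (hφ : Continuous φ) :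
    HasSum (fun k : ℤ => ‖co φ k‖ ^ 2) (2 * π * ∫ x in (-π)..π, ‖φ x‖ ^ 2) := by
  have hab : -π < π := by linarith [Real.pi_pos]
  have hL : MemLp φ 2 (volume.restrict (Ioc (-π) π)) := by
    have h1 : MemLp φ 2 (volume.restrict (Icc (-π) π)) :=
      by
      obtain ⟨M, hM⟩ := isCompact_Icc.exists_bound_of_continuousOn (hφ.continuousOn (s := Icc (-π) π))
      refine MemLp.of_bound hφ.aestronglyMeasurable M ?_
      exact (ae_restrict_mem measurableSet_Icc).mono fun x hx => hM x hx
    exact h1.mono_measure (Measure.restrict_mono Ioc_subset_Icc_self le_rfl)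
  have h := (hasSum_sq_fourierCoeffOn hab hL).mul_left ((2 * π) ^ 2)
  simp only [norm_coeffOn] at h
  have hp := Real.pi_pos
  convert h using 1
  · rfl
  · ext k
    rw [← mul_assoc, ← mul_pow, mul_inv_cancel₀ (by positivity), one_pow, one_mul]
  · rw [smul_eq_mul]
    have : π - -π = 2 * π := by ring
    rw [this]
    field_simp

lemma co_deriv (φ : ℝ → ℂ) (hφ : ContDiff ℝ 1 φ) (hp : Function.Periodic φ (2 * π)) (k : ℤ) :
    co (deriv φ) k = (k * Complex.I) * co φ k := by
  unfold co
  have hu : ∀ x : ℝ, HasDerivAt (fun x : ℝ => Complex.exp (-(k * x * Complex.I)))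
      (-(k * Complex.I) * Complex.exp (-(k * x * Complex.I))) x := by
    intro x
    have h1 : HasDerivAt (fun x : ℝ => -((k : ℂ) * (x : ℂ) * Complex.I)) (-(k * Complex.I)) x := by
      have := (((hasDerivAt_id x).ofReal_comp.const_mul (k : ℂ)).mul_const Complex.I).neg
      simp only [Complex.ofReal_one, mul_one] at this
      exact this
    convert h1.cexp using 1
    ring
  have hv : ∀ x : ℝ, HasDerivAt φ (deriv φ x) x := fun x =>
    (hφ.differentiable (by norm_num) x).hasDerivAt
  have hc : Continuous (deriv φ) := hφ.continuous_deriv (by norm_num)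
  rw [intervalIntegral.integral_mul_deriv_eq_deriv_mul (fun x _ => hu x) (fun x _ => hv x)
    (Continuous.intervalIntegrable (by fun_prop) _ _) (hc.intervalIntegrable _ _)]
  have e1 : φ π = φ (-π) := by
    have := hp (-π)
    rw [← this]; congr 1; ring
  have e2 : Complex.exp (-(k * (π : ℝ) * Complex.I)) =
      Complex.exp (-(k * ((-π : ℝ) : ℂ) * Complex.I)) := by
    rw [Complex.exp_eq_exp_iff_exists_int]
    refine ⟨-k, ?_⟩
    push_cast; ring
  rw [e1, e2, sub_self, zero_sub, ← intervalIntegral.integral_const_mul,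
    ← intervalIntegral.integral_neg]
  congr 1; ext x; ring

lemma periodic_deriv (φ : ℝ → ℂ) (hp : Function.Periodic φ (2 * π)) :
    Function.Periodic (deriv φ) (2 * π) := by
  intro x
  have h : (fun y => φ (y + 2 * π)) = φ := funext hp
  rw [← deriv_comp_add_const, h]

lemma co_iter (n : ℕ) : ∀ (φ : ℝ → ℂ) (_ : ContDiff ℝ n φ) (_ : Function.Periodic φ (2 * π))
    (k : ℤ), co (iteratedDeriv n φ) k = (k * Complex.I) ^ n * co φ k := by
  induction n with
  | zero => intro φ _ _ k; simp
  | succ n ih =>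
    intro φ h hp k
    rw [iteratedDeriv_succ', ih (deriv φ) ?_ (periodic_deriv φ hp), co_deriv φ ?_ hp]
    · ring
    · exact h.of_le (by norm_cast; omega)
    · have : ContDiff ℝ ((n : WithTop ℕ∞) + 1) φ := by exact_mod_cast h
      exact (contDiff_succ_iff_deriv.1 this).2.2

lemma line_sum (φ : ℝ → ℂ) (h : ContDiff ℝ 4 φ) (hp : Function.Periodic φ (2 * π)) :
    HasSum (fun k : ℤ => (1 + (k : ℝ) ^ 8) * ‖co φ k‖ ^ 2)
      (2 * π * ∫ x in (-π)..π, ‖φ x‖ ^ 2 + ‖iteratedDeriv 4 φ x‖ ^ 2) := by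
  have hc : Continuous (iteratedDeriv 4 φ) := h.continuous_iteratedDeriv 4 (by norm_num)
  have h0 : Continuous φ := h.continuous
  have := (parseval φ h0).add (parseval _ hc)
  rw [intervalIntegral.integral_add (Continuous.intervalIntegrable (by fun_prop) _ _)
    (Continuous.intervalIntegrable (by fun_prop) _ _), mul_add]
  convert this using 1
  ext k
  rw [co_iter 4 φ (by exact_mod_cast h) hp, norm_mul, mul_pow, norm_pow, norm_mul]
  simp only [Complex.norm_I, mul_one, Complex.norm_intCast]
  rw [← pow_mul, show 4 * 2 = 8 from rfl, Even.pow_abs (by decide)]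
  ring

lemma co_line (r ζ : ℝ) (g : ℂ → ℂ) (hζ : |ζ| ≤ r)
    (hper : ∀ w : ℂ, g (w + ((2 * π : ℝ) : ℂ)) = g w)
    (hd : DifferentiableOn ℂ g (stripO r)) (hc : ContinuousOn g (stripC r)) (k : ℤ) :
    co (fun x : ℝ => g ((x : ℂ) + (ζ : ℂ) * Complex.I)) k =
      Complex.exp (-(k * ζ)) * co (fun x : ℝ => g (x : ℂ)) k := by
  obtain ⟨hz1, hz2⟩ := abs_le.1 hζ
  have hr : 0 ≤ r := (abs_nonneg _).trans hζ
  set F : ℂ → ℂ := fun w => Complex.exp (-(k * w * Complex.I)) * g w with hF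
  have hFper : ∀ w : ℂ, F (w + ((2 * π : ℝ) : ℂ)) = F w := by
    intro w
    simp only [hF, hper]
    congr 1
    rw [Complex.exp_eq_exp_iff_exists_int]
    exact ⟨-k, by push_cast; ring⟩
  have hFc : ContinuousOn F (stripC r) :=
    ContinuousOn.mul (Continuous.continuousOn (by fun_prop)) hc
  have hFd : DifferentiableOn ℂ F (stripO r) :=
    DifferentiableOn.mul (Differentiable.differentiableOn (by fun_prop)) hd
  have key := Complex.integral_boundary_rect_eq_zero_of_continuousOn_of_differentiableOn F
    ⟨-π, 0⟩ ⟨π, ζ⟩ (hFc.mono ?_) (hFd.mono ?_)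
  · have hv : (∫ y : ℝ in (0 : ℝ)..ζ, F ((π : ℝ) + y * Complex.I)) =
        ∫ y : ℝ in (0 : ℝ)..ζ, F (((-π : ℝ) : ℂ) + y * Complex.I) := by
      congr 1; ext y
      rw [← hFper (((-π : ℝ) : ℂ) + y * Complex.I)]
      congr 1; push_cast; ring
    simp only [hv, add_sub_cancel_right] at key
    rw [sub_eq_zero] at key
    have e0 : (∫ x : ℝ in (-π)..π, F (x + ((0 : ℝ) : ℂ) * Complex.I)) =
        co (fun x : ℝ => g (x : ℂ)) k := by
      unfold co
      simp [hF]
    have e1 : (∫ x : ℝ in (-π)..π, F (x + (ζ : ℂ) * Complex.I)) =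
        Complex.exp (k * ζ) * co (fun x : ℝ => g ((x : ℂ) + (ζ : ℂ) * Complex.I)) k := by
      unfold co
      rw [← intervalIntegral.integral_const_mul]
      congr 1; ext x
      simp only [hF]
      rw [← mul_assoc, ← Complex.exp_add]
      congr 2
      linear_combination (-(k : ℂ) * ζ) * Complex.I_sq
    rw [e0, e1] at key
    rw [key, ← mul_assoc, ← Complex.exp_add]
    simp
  · intro w hw
    have h2 := hw.2
    simp only [mem_preimage, mem_uIcc] at h2
    simp only [stripC, mem_ofPred_eq, abs_le]
    rcases h2 with h2 | h2 <;> constructor <;> linarith [h2.1, h2.2]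
  · intro w hw
    have h2 := hw.2
    simp only [mem_preimage, mem_Ioo, min_lt_iff, lt_max_iff] at h2
    simp only [stripO, mem_ofPred_eq, abs_lt]
    obtain ⟨a, b⟩ := h2
    constructor
    · rcases a with a | a <;> rcases b with b | b <;> linarith
    · rcases a with a | a <;> rcases b with b | b <;> linarith

lemma scalar_aux (t r r' : ℝ) (ht : 0 ≤ t) (h0 : 0 ≤ r') (h : r' < r) :
    t ^ 2 * (exp (-(t * r')) ^ 2 + exp (t * r') ^ 2) ≤
      (2 / (r - r')) ^ 2 * (exp (-(t * r)) ^ 2 + exp (t * r) ^ 2) := by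
  have hδ : 0 < r - r' := by linarith
  have h1 : t * (r - r') ≤ exp (t * (r - r')) := by linarith [add_one_le_exp (t * (r - r'))]
  have h2 : exp (-(t * r')) ≤ exp (t * r') := by
    apply exp_le_exp.2; nlinarith [mul_nonneg ht h0]
  have h3 : exp (t * r) = exp (t * (r - r')) * exp (t * r') := by
    rw [← exp_add]; congr 1; ring
  have h4 : t * (r - r') * exp (t * r') ≤ exp (t * r) := by
    rw [h3]; gcongr
  have h5 : (t * (r - r') * exp (t * r')) ^ 2 ≤ exp (t * r) ^ 2 := by gcongr
  have h6 : exp (-(t * r')) ^ 2 ≤ exp (t * r') ^ 2 := by gcongr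
  rw [div_pow, div_mul_eq_mul_div, le_div_iff₀ (by positivity)]
  have h7 : t ^ 2 * (r - r') ^ 2 * exp (-(t * r')) ^ 2 ≤
    t ^ 2 * (r - r') ^ 2 * exp (t * r') ^ 2 := by gcongr
  nlinarith [sq_nonneg (exp (-(t * r))), sq_nonneg (exp (t * r))]

lemma scalar_ineq (t r r' : ℝ) (h0 : 0 ≤ r') (h : r' < r) :
    t ^ 2 * (exp (-(t * r')) ^ 2 + exp (t * r') ^ 2) ≤
      (2 / (r - r')) ^ 2 * (exp (-(t * r)) ^ 2 + exp (t * r) ^ 2) := by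
  rcases le_total 0 t with ht | ht
  · exact scalar_aux t r r' ht h0 h
  · have := scalar_aux (-t) r r' (by linarith) h0 h
    simp only [neg_mul, neg_neg, neg_sq] at this
    linarith

lemma norm_co_line (r ζ : ℝ) (g : ℂ → ℂ) (hζ : |ζ| ≤ r)
    (hper : ∀ w : ℂ, g (w + ((2 * π : ℝ) : ℂ)) = g w)
    (hd : DifferentiableOn ℂ g (stripO r)) (hc : ContinuousOn g (stripC r)) (k : ℤ) :
    ‖co (fun x : ℝ => g ((x : ℂ) + (ζ : ℂ) * Complex.I)) k‖ =
      exp (-(k * ζ)) * ‖co (fun x : ℝ => g (x : ℂ)) k‖ := by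
  rw [co_line r ζ g hζ hper hd hc, norm_mul, Complex.norm_exp]
  simp

lemma per_line (ζ : ℝ) (g : ℂ → ℂ) (hper : ∀ w : ℂ, g (w + ((2 * π : ℝ) : ℂ)) = g w) :
    Function.Periodic (fun x : ℝ => g ((x : ℂ) + (ζ : ℂ) * Complex.I)) (2 * π) := by
  intro x
  simp only
  rw [← hper (x + ζ * Complex.I)]
  congr 1; push_cast; ring

lemma isOpen_stripO (r : ℝ) : IsOpen (stripO r) :=
  isOpen_lt (by fun_prop) continuous_const

lemma mem_line (r ζ x : ℝ) (hζ : |ζ| < r) : (x : ℂ) + (ζ : ℂ) * Complex.I ∈ stripO r := by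
  simpa [stripO] using hζ

lemma smooth_line (r ζ : ℝ) (g : ℂ → ℂ) (hζ : |ζ| < r) (hd : DifferentiableOn ℂ g (stripO r))
    (n : ℕ) : ContDiff ℝ n (fun x : ℝ => g ((x : ℂ) + (ζ : ℂ) * Complex.I)) := by
  have h1 : ContDiffOn ℝ n g (stripO r) :=
    (hd.contDiffOn (n := n) (isOpen_stripO r)).restrict_scalars ℝ
  have h2 : ContDiff ℝ n (fun x : ℝ => (x : ℂ) + (ζ : ℂ) * Complex.I) :=
    Complex.ofRealCLM.contDiff.add contDiff_const
  exact h1.comp_contDiff h2 (fun x => mem_line r ζ x hζ)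

lemma deriv_line (r ζ : ℝ) (g : ℂ → ℂ) (hζ : |ζ| < r) (hd : DifferentiableOn ℂ g (stripO r)) :
    deriv (fun x : ℝ => g ((x : ℂ) + (ζ : ℂ) * Complex.I)) =
      (fun x : ℝ => deriv g ((x : ℂ) + (ζ : ℂ) * Complex.I)) := by
  ext x
  have h1 : HasDerivAt g (deriv g ((x : ℂ) + (ζ : ℂ) * Complex.I)) ((x : ℂ) + (ζ : ℂ) * Complex.I) :=
    (hd.differentiableAt ((isOpen_stripO r).mem_nhds (mem_line r ζ x hζ))).hasDerivAt
  have h2 : HasDerivAt (fun x : ℝ => (x : ℂ) + (ζ : ℂ) * Complex.I) 1 x := by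
    simpa using (hasDerivAt_id x).ofReal_comp.add_const ((ζ : ℂ) * Complex.I)
  have h3 := (h1.comp x h2).deriv
  rw [mul_one] at h3
  exact h3

/-- sum for the derivative on an interior line -/
lemma dline_sum (r ζ : ℝ) (g : ℂ → ℂ) (hζ : |ζ| < r)
    (hper : ∀ w : ℂ, g (w + ((2 * π : ℝ) : ℂ)) = g w)
    (hd : DifferentiableOn ℂ g (stripO r)) (hc : ContinuousOn g (stripC r)) :
    HasSum (fun k : ℤ => (1 + (k : ℝ) ^ 8) *
        ((k : ℝ) ^ 2 * (exp (-(k * ζ)) ^ 2 * ‖co (fun x : ℝ => g (x : ℂ)) k‖ ^ 2)))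
      (2 * π * ∫ x in (-π)..π, ‖deriv g ((x : ℂ) + (ζ : ℂ) * Complex.I)‖ ^ 2 +
        ‖iteratedDeriv 4 (fun x : ℝ => deriv g ((x : ℂ) + (ζ : ℂ) * Complex.I)) x‖ ^ 2) := by
  have hs := smooth_line r ζ (deriv g) hζ (hd.deriv (isOpen_stripO r)) 4
  have hp := periodic_deriv _ (per_line ζ g hper)
  rw [deriv_line r ζ g hζ hd] at hp
  have := line_sum _ (by exact_mod_cast hs) hp
  convert this using 1
  ext k
  rw [← deriv_line r ζ g hζ hd, co_deriv _ (by exact_mod_cast smooth_line r ζ g hζ hd 1)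
    (per_line ζ g hper), norm_mul, norm_co_line r ζ g hζ.le hper hd hc, norm_mul]
  simp only [Complex.norm_I, mul_one, Complex.norm_intCast, mul_pow, sq_abs]

lemma bdry_sum (r ζ : ℝ) (g : ℂ → ℂ) (hζ : |ζ| ≤ r)
    (hper : ∀ w : ℂ, g (w + ((2 * π : ℝ) : ℂ)) = g w)
    (hd : DifferentiableOn ℂ g (stripO r)) (hc : ContinuousOn g (stripC r))
    (hs : ContDiff ℝ 4 (fun x : ℝ => g ((x : ℂ) + (ζ : ℂ) * Complex.I))) :
    HasSum (fun k : ℤ => (1 + (k : ℝ) ^ 8) *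
        (exp (-(k * ζ)) ^ 2 * ‖co (fun x : ℝ => g (x : ℂ)) k‖ ^ 2))
      (2 * π * ∫ x in (-π)..π, ‖g ((x : ℂ) + (ζ : ℂ) * Complex.I)‖ ^ 2 +
        ‖iteratedDeriv 4 (fun x : ℝ => g ((x : ℂ) + (ζ : ℂ) * Complex.I)) x‖ ^ 2) := by
  have := line_sum _ hs (per_line ζ g hper)
  convert this using 1
  ext k
  rw [norm_co_line r ζ g hζ hper hd hc, mul_pow]

/-- Cauchy-type estimate on the scale of Banach spaces:
`‖∂_α g‖_{r'} ≤ C/(r - r') ‖g‖_r` for `2π`-periodic functions holomorphic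
on the strip of half-width `r`, with a universal constant `C`. -/
theorem cauchy_estimate_strip :
    ∃ C > 0, ∀ (r r' : ℝ) (g : ℂ → ℂ), 0 ≤ r' → r' < r →
      (∀ w : ℂ, g (w + ((2 * π : ℝ) : ℂ)) = g w) →
      DifferentiableOn ℂ g (stripO r) →
      ContinuousOn g (stripC r) →
      ContDiff ℝ 4 (fun α : ℝ => g ((α : ℂ) + (r : ℂ) * Complex.I)) →
      ContDiff ℝ 4 (fun α : ℝ => g ((α : ℂ) - (r : ℂ) * Complex.I)) →
      strNorm (deriv g) r' ≤ (C / (r - r')) * strNorm g r := by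
  refine ⟨2, by norm_num, ?_⟩
  intro r r' g h0 hlt hper hd hc hs1 hs2
  have hr : 0 < r := by linarith
  have hsub : ∀ (ρ : ℝ) (x : ℝ), (x : ℂ) - (ρ : ℂ) * Complex.I =
      (x : ℂ) + ((-ρ : ℝ) : ℂ) * Complex.I := by
    intro ρ x; push_cast; ring
  simp only [hsub] at hs2
  have A1 := dline_sum r r' g (by rwa [abs_of_nonneg h0]) hper hd hc
  have A2 := dline_sum r (-r') g (by rwa [abs_neg, abs_of_nonneg h0]) hper hd hc
  have B1 := bdry_sum r r g (by rw [abs_of_nonneg hr.le]) hper hd hc hs1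
  have B2 := bdry_sum r (-r) g (by rw [abs_neg, abs_of_nonneg hr.le]) hper hd hc hs2
  have hle := hasSum_le (fun k : ℤ => ?_) (A1.add A2) ((B1.add B2).mul_left ((2 / (r - r')) ^ 2))
  · rw [← mul_add, ← mul_add, mul_left_comm] at hle
    have hle' := le_of_mul_le_mul_left hle (by positivity)
    have hC : 0 ≤ 2 / (r - r') := div_nonneg (by norm_num) (by linarith)
    unfold strNorm
    simp only [hsub]
    calc _ ≤ Real.sqrt _ := Real.sqrt_le_sqrt hle'
      _ = _ := by rw [Real.sqrt_mul (sq_nonneg _), Real.sqrt_sq hC]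
  · have hk := scalar_ineq (k : ℝ) r r' h0 hlt
    have hn : 0 ≤ (1 + (k : ℝ) ^ 8) * ‖co (fun x : ℝ => g (x : ℂ)) k‖ ^ 2 :=
      mul_nonneg (by have := Even.pow_nonneg (n := 8) (by decide) (k : ℝ); linarith) (sq_nonneg _)
    have := mul_le_mul_of_nonneg_left hk hn
    simp only [mul_neg, neg_neg]
    linarith
end
end
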